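/- For every vector V ∈ ℝ^{m+1} one has ⟨MV,V⟩ ≤ (|w₋₁| − 10w₂)·b̃·⟨V,V⟩; equivalently, the logarithmic ℓ2-norm satisfies μ₂[M] ≤ (|w₋₁| − 10w₂)·b̃. -/

import Mathlib

open Matrix

/-- Extension of a vector on {0,…,m} to ℤ by zero (homogeneous Dirichlet
boundary conditions). -/
def extZ (m : ℕ) (V : Fin (m+1) → ℝ) (k : ℤ) : ℝ :=
  if h : 0 ≤ k ∧ k ≤ (m : ℤ) then V ⟨k.toNat, by omega⟩ else 0

/-- The action of the upwind convection matrix M: row i is the upwind stencil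
(w₂, w₁, w₀, w₋₁)/Δx multiplied by g_i, the stencil direction depending on the
sign of g_i, with values outside {0,…,m} taken equal to zero. -/
noncomputable def Mact (m : ℕ) (Δx : ℝ) (g : ℕ → ℝ) (wm1 w0 w1 w2 : ℝ)
    (V : Fin (m+1) → ℝ) : Fin (m+1) → ℝ := fun i =>
  if 0 < g i.val then
    (g i.val / Δx) * (w2 * extZ m V ((i.val : ℤ) + 2) + w1 * extZ m V ((i.val : ℤ) + 1)
      + w0 * V i + wm1 * extZ m V ((i.val : ℤ) - 1))
  else if g i.val < 0 then
    (g i.val / Δx) * (-wm1 * extZ m V ((i.val : ℤ) + 1) - w0 * V i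
      - w1 * extZ m V ((i.val : ℤ) - 1) - w2 * extZ m V ((i.val : ℤ) - 2))
  else 0

/-!
Measured from the zero `s` of the speed, in units of `Δx`, the row of `M` at node `i` is
`b̃ |i - s|` times an upwind stencil pointing away from `s`. As a function of `s` this row is affine
between consecutive nodes, so it is enough to treat `s` at a node, and by translation `s = 0`. There
the form splits into two half-lines that are mirror images of each other. On the half-line `i ≥ 1`,
summation by parts turns `∑ i (D f)ᵢ fᵢ` into the dissipation `-(c/2) ∑ i (fᵢ - 2fᵢ₋₁ + fᵢ₋₂)²`, a
form of size `(3c + |1/2 - 3c|) ∑ fᵢ²` coming from the slope of the weight, and a boundary term in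
`f₀, f₋₁`, which the sum over both half-lines absorbs.
-/

open Function

lemma mul_mul_le_abs_half_mul_add_sq {𝕜 : Type*} [Field 𝕜] [LinearOrder 𝕜] [IsStrictOrderedRing 𝕜]
    (a x y : 𝕜) : a * (x * y) ≤ |a| / 2 * (x ^ 2 + y ^ 2) := by
  have hxy : |x * y| ≤ (x ^ 2 + y ^ 2) / 2 := by
    rw [abs_mul]
    linarith [two_mul_le_add_sq |x| |y|, sq_abs x, sq_abs y]
  calc a * (x * y) ≤ |a| * |x * y| := (le_abs_self _).trans_eq (abs_mul _ _)
    _ ≤ |a| * ((x ^ 2 + y ^ 2) / 2) := by gcongr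
    _ = |a| / 2 * (x ^ 2 + y ^ 2) := by ring

lemma posPart_sub_swap {G : Type*} [Lattice G] [AddCommGroup G] [AddLeftMono G] (x y : G) :
    (y - x)⁺ = (x - y)⁺ - (x - y) := by
  rw [← neg_sub x y, posPart_neg, eq_sub_iff_add_eq', ← eq_sub_iff_add_eq, posPart_sub_negPart]

lemma posPart_intCast_sub_eq_floor_combination {𝕜 : Type*} [CommRing 𝕜] [LinearOrder 𝕜]
    [IsStrictOrderedRing 𝕜] [FloorRing 𝕜] (i : ℤ) (s : 𝕜) :
    (i - s)⁺ = (1 - Int.fract s) * (i - ⌊s⌋ : 𝕜)⁺ + Int.fract s * (i - (⌊s⌋ + 1 : ℤ) : 𝕜)⁺ := by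
  push_cast
  rcases le_or_gt i ⌊s⌋ with hi | hi
  · have hi' : (i : 𝕜) ≤ ⌊s⌋ := Int.cast_le.2 hi
    rw [posPart_of_nonpos (by linarith [Int.floor_le s]), posPart_of_nonpos (by linarith),
      posPart_of_nonpos (by linarith), mul_zero, mul_zero, add_zero]
  · have hi' : (⌊s⌋ : 𝕜) + 1 ≤ i := by exact_mod_cast hi
    rw [posPart_of_nonneg (by linarith [Int.lt_floor_add_one s]), posPart_of_nonneg (by linarith),
      posPart_of_nonneg (by linarith), Int.fract]
    ring

lemma hasFiniteSupport_sq {ι R : Type*} [MonoidWithZero R] {u : ι → R}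
    (hu : u.HasFiniteSupport) : HasFiniteSupport fun i ↦ u i ^ 2 :=
  hu.fun_comp (g := (· ^ 2)) (zero_pow two_ne_zero)

lemma sq_le_tsum_sq {ι : Type*} {u : ι → ℝ} (hu : u.HasFiniteSupport) (i : ι) :
    u i ^ 2 ≤ ∑' k, u k ^ 2 :=
  (summable_of_hasFiniteSupport (hasFiniteSupport_sq hu)).le_tsum i fun _ _ ↦ sq_nonneg _

lemma tsum_sub_succ_eq {G : Type*} [AddCommGroup G] [TopologicalSpace G] [IsTopologicalAddGroup G]
    [T2Space G] {F : ℕ → G} (hF : Summable F) : ∑' k, (F k - F (k + 1)) = F 0 := by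
  rw [hF.tsum_sub ((summable_nat_add_iff 1).2 hF), hF.tsum_eq_zero_add, add_sub_cancel_right]

lemma natCast_add_one_injective : Injective fun k : ℕ ↦ (k : ℤ) + 1 :=
  (add_left_injective 1).comp Nat.cast_injective

lemma tsum_int_eq_of_hasFiniteSupport {M : Type*} [AddCommMonoid M] [TopologicalSpace M]
    [ContinuousAdd M] [T2Space M] {F : ℤ → M} (hF : F.HasFiniteSupport) :
    ∑' i, F i = ∑' k : ℕ, F (k + 1) + F 0 + ∑' k : ℕ, F (-(k + 1)) :=
  tsum_of_add_one_of_neg_add_one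
    (summable_of_hasFiniteSupport (hF.fun_comp_of_injective natCast_add_one_injective))
    (summable_of_hasFiniteSupport
      (hF.fun_comp_of_injective (neg_injective.comp natCast_add_one_injective)))

/-- `-Δx f'` at node `i`, discretised on the nodes `i - 2, …, i + 1`. The order conditions leave one
degree of freedom in the weights: with `c = -w₂` they force `w₁ = 1/2 + 3c`, `w₀ = -3c`,
`w₋₁ = c - 1/2`. -/
noncomputable def upwindStencil (c : ℝ) (f : ℤ → ℝ) (i : ℤ) : ℝ :=
  -c * f (i - 2) + (1 / 2 + 3 * c) * f (i - 1) - 3 * c * f i + (c - 1 / 2) * f (i + 1)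

/-- Upwind convection on the mesh `ℤ` with speed vanishing at `s`. Nodes to the left of `s` use the
mirrored stencil, obtained by reflecting `f`. -/
noncomputable def upwindConvection (c s : ℝ) (f : ℤ → ℝ) (i : ℤ) : ℝ :=
  (i - s)⁺ * upwindStencil c f i + (s - i)⁺ * upwindStencil c (fun k ↦ f (-k)) (-i)

/-- The quantity telescoped by summation by parts in `∑ i (D f)ᵢ fᵢ`, at the edge between `i` and
`i + 1`. The `|1/2 - 3c| / 2` term shares the bound on the cross term `fᵢ fᵢ₋₁` evenly between its
two nodes. -/
noncomputable def upwindFlux (c : ℝ) (f : ℤ → ℝ) (i : ℤ) : ℝ :=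
  (1 / 2 - c) * i * (f (i + 1) * f i) - 2 * c * (i + 1) * (f i * f (i - 1))
    + (3 * c + 5 / 2 * c * i + |1 / 2 - 3 * c| / 2) * f i ^ 2 + c * (i + 1) / 2 * f (i - 1) ^ 2

section Line

variable {c : ℝ} {f : ℤ → ℝ}

lemma mul_upwindStencil_mul_self_eq (c : ℝ) (f : ℤ → ℝ) (i : ℤ) :
    i * (upwindStencil c f i * f i) =
      3 * c * f i ^ 2 + (1 / 2 - 3 * c) * (f i * f (i - 1))
        - c / 2 * i * (f i - 2 * f (i - 1) + f (i - 2)) ^ 2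
        + |1 / 2 - 3 * c| / 2 * (f i ^ 2 - f (i - 1) ^ 2)
        + (upwindFlux c f (i - 1) - upwindFlux c f i) := by
  simp only [upwindStencil, upwindFlux, sub_add_cancel, sub_sub, one_add_one_eq_two, Int.cast_sub,
    Int.cast_one]
  ring

lemma mul_upwindStencil_mul_self_le (hc : 0 ≤ c) {i : ℤ} (hi : 0 ≤ i) :
    i * (upwindStencil c f i * f i) ≤
      (3 * c + |1 / 2 - 3 * c|) * f i ^ 2 + (upwindFlux c f (i - 1) - upwindFlux c f i) := by
  have : (0 : ℝ) ≤ i := Int.cast_nonneg hi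
  have dissipation : 0 ≤ c / 2 * i * (f i - 2 * f (i - 1) + f (i - 2)) ^ 2 := by positivity
  linarith [mul_upwindStencil_mul_self_eq c f i,
    mul_mul_le_abs_half_mul_add_sq (1 / 2 - 3 * c) (f i) (f (i - 1))]

lemma upwindFlux_zero_le (hc : 0 ≤ c) :
    upwindFlux c f 0 ≤
      (4 * c + |1 / 2 - 3 * c| / 2) * f 0 ^ 2 + 3 / 2 * c * f (-1) ^ 2 := by
  have : 0 ≤ c * (f 0 + f (-1)) ^ 2 := by positivity
  simp only [upwindFlux, Int.cast_zero, zero_sub]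
  linarith

lemma hasFiniteSupport_upwindFlux (c : ℝ) (hf : f.HasFiniteSupport) :
    (upwindFlux c f).HasFiniteSupport := by
  have hnext := hf.fun_mul_right fun i ↦ f (i + 1)
  have hprev := hf.fun_mul_left fun i ↦ f (i - 1)
  have hsq := hasFiniteSupport_sq hf
  have hsq_prev := hsq.fun_comp_of_injective (sub_left_injective (b := 1))
  exact (((hnext.fun_mul_right _).fun_sub (hprev.fun_mul_right _)).fun_add
    (hsq.fun_mul_right _)).fun_add (hsq_prev.fun_mul_right _)

lemma tsum_add_one_mul_upwindStencil_mul_self_le (hc : 0 ≤ c) (hf : f.HasFiniteSupport) :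
    ∑' k : ℕ, ((k : ℝ) + 1) * (upwindStencil c f (k + 1) * f (k + 1)) ≤
      (3 * c + |1 / 2 - 3 * c|) * ∑' k : ℕ, f (k + 1) ^ 2
        + (4 * c + |1 / 2 - 3 * c| / 2) * f 0 ^ 2 + 3 / 2 * c * f (-1) ^ 2 := by
  have hf₁ : HasFiniteSupport fun k : ℕ ↦ f (k + 1) :=
    hf.fun_comp_of_injective natCast_add_one_injective
  have hsq : Summable fun k : ℕ ↦ (3 * c + |1 / 2 - 3 * c|) * f (k + 1) ^ 2 :=
    summable_of_hasFiniteSupport ((hasFiniteSupport_sq hf₁).fun_mul_right _)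
  have hflux : Summable fun k : ℕ ↦ upwindFlux c f k := summable_of_hasFiniteSupport <|
    (hasFiniteSupport_upwindFlux c hf).fun_comp_of_injective Nat.cast_injective
  have hdiff : Summable fun k : ℕ ↦ upwindFlux c f k - upwindFlux c f (k + 1 : ℕ) :=
    hflux.sub ((summable_nat_add_iff 1).2 hflux)
  calc ∑' k : ℕ, ((k : ℝ) + 1) * (upwindStencil c f (k + 1) * f (k + 1))
      ≤ ∑' k : ℕ, ((3 * c + |1 / 2 - 3 * c|) * f (k + 1) ^ 2
          + (upwindFlux c f k - upwindFlux c f (k + 1 : ℕ))) := by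
        refine Summable.tsum_le_tsum (fun k ↦ ?_)
          (summable_of_hasFiniteSupport ((hf₁.fun_mul_right _).fun_mul_right _)) (hsq.add hdiff)
        simpa using mul_upwindStencil_mul_self_le (f := f) hc (Int.natCast_nonneg (k + 1))
    _ = (3 * c + |1 / 2 - 3 * c|) * ∑' k : ℕ, f (k + 1) ^ 2 + upwindFlux c f 0 := by
        rw [hsq.tsum_add hdiff, tsum_mul_left, tsum_sub_succ_eq hflux, Nat.cast_zero]
    _ ≤ _ := by linarith [upwindFlux_zero_le (f := f) hc]

lemma upwindConvection_zero_zero (c : ℝ) (f : ℤ → ℝ) : upwindConvection c 0 f 0 = 0 := by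
  simp [upwindConvection]

lemma upwindConvection_zero_of_nonneg (c : ℝ) (f : ℤ → ℝ) {i : ℤ} (hi : 0 ≤ i) :
    upwindConvection c 0 f i = i * upwindStencil c f i := by
  simp [upwindConvection, hi]

lemma upwindConvection_zero_neg (c : ℝ) (f : ℤ → ℝ) (i : ℤ) :
    upwindConvection c 0 f (-i) = upwindConvection c 0 (fun k ↦ f (-k)) i := by
  simp [upwindConvection, add_comm]

lemma tsum_upwindConvection_zero_mul_self_le (hc : 0 ≤ c) (hf : f.HasFiniteSupport) :
    ∑' i, upwindConvection c 0 f i * f i ≤ (8 * c + |1 / 2 - 3 * c|) * ∑' i, f i ^ 2 := by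
  have hneg : HasFiniteSupport fun i ↦ f (-i) := hf.fun_comp_of_injective neg_injective
  have right := tsum_add_one_mul_upwindStencil_mul_self_le hc hf
  have left := tsum_add_one_mul_upwindStencil_mul_self_le hc hneg
  have form_split : ∑' i, upwindConvection c 0 f i * f i =
      ∑' k : ℕ, ((k : ℝ) + 1) * (upwindStencil c f (k + 1) * f (k + 1)) +
        ∑' k : ℕ, ((k : ℝ) + 1) *
          (upwindStencil c (fun i ↦ f (-i)) (k + 1) * f (-(k + 1))) := by
    have hk (k : ℕ) : (0 : ℤ) ≤ k + 1 := by positivity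
    simp only [tsum_int_eq_of_hasFiniteSupport (hf.fun_mul_right (upwindConvection c 0 f)),
      upwindConvection_zero_zero, upwindConvection_zero_neg,
      upwindConvection_zero_of_nonneg c _ (hk _), zero_mul, add_zero, mul_assoc, Int.cast_add,
      Int.cast_natCast, Int.cast_one]
  have sq_split : ∑' i, f i ^ 2 =
      ∑' k : ℕ, f (k + 1) ^ 2 + f 0 ^ 2 + ∑' k : ℕ, f (-(k + 1)) ^ 2 :=
    tsum_int_eq_of_hasFiniteSupport (hasFiniteSupport_sq hf)
  have sq_right : f 1 ^ 2 ≤ ∑' k : ℕ, f (k + 1) ^ 2 := by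
    simpa using sq_le_tsum_sq (hf.fun_comp_of_injective natCast_add_one_injective) 0
  have sq_left : f (-1) ^ 2 ≤ ∑' k : ℕ, f (-(k + 1)) ^ 2 := by
    simpa using sq_le_tsum_sq (hneg.fun_comp_of_injective natCast_add_one_injective) 0
  simp only [neg_zero, neg_neg] at left
  rw [form_split, sq_split]
  have := mul_le_mul_of_nonneg_left sq_right hc
  have := mul_le_mul_of_nonneg_left sq_left hc
  have := mul_nonneg hc ((sq_nonneg _).trans sq_right)
  have := mul_nonneg hc ((sq_nonneg _).trans sq_left)
  linarith

lemma upwindConvection_add_intCast (c s : ℝ) (f : ℤ → ℝ) (i j : ℤ) :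
    upwindConvection c (s + j) f (i + j) = upwindConvection c s (fun k ↦ f (k + j)) i := by
  simp only [upwindConvection, upwindStencil, Int.cast_add, add_sub_add_right_eq_sub]
  congr 5 <;> ring_nf

lemma tsum_upwindConvection_intCast_mul_self_le (hc : 0 ≤ c) (hf : f.HasFiniteSupport) (j : ℤ) :
    ∑' i, upwindConvection c j f i * f i ≤ (8 * c + |1 / 2 - 3 * c|) * ∑' i, f i ^ 2 := by
  have hshift := tsum_upwindConvection_zero_mul_self_le hc
    (hf.fun_comp_of_injective (add_left_injective j))
  simp only [← upwindConvection_add_intCast, zero_add] at hshift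
  rwa [← (Equiv.addRight j).tsum_eq fun i ↦ upwindConvection c j f i * f i,
    ← (Equiv.addRight j).tsum_eq fun i ↦ f i ^ 2]

lemma upwindConvection_eq_floor_combination (c s : ℝ) (f : ℤ → ℝ) (i : ℤ) :
    upwindConvection c s f i = (1 - Int.fract s) * upwindConvection c ⌊s⌋ f i
      + Int.fract s * upwindConvection c (⌊s⌋ + 1 : ℤ) f i := by
  simp only [upwindConvection, posPart_sub_swap (i : ℝ),
    posPart_intCast_sub_eq_floor_combination i s]
  rw [Int.fract]
  push_cast
  ring

lemma tsum_upwindConvection_mul_self_le (hc : 0 ≤ c) (hf : f.HasFiniteSupport) (s : ℝ) :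
    ∑' i, upwindConvection c s f i * f i ≤ (8 * c + |1 / 2 - 3 * c|) * ∑' i, f i ^ 2 := by
  set C := (8 * c + |1 / 2 - 3 * c|) * ∑' i, f i ^ 2
  have hsum (a s' : ℝ) : Summable fun i ↦ a * (upwindConvection c s' f i * f i) :=
    summable_of_hasFiniteSupport ((hf.fun_mul_right _).fun_mul_right _)
  calc ∑' i, upwindConvection c s f i * f i
      = (1 - Int.fract s) * ∑' i, upwindConvection c ⌊s⌋ f i * f i
          + Int.fract s * ∑' i, upwindConvection c (⌊s⌋ + 1 : ℤ) f i * f i := by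
        simp only [upwindConvection_eq_floor_combination c s f, add_mul, mul_assoc]
        rw [(hsum _ _).tsum_add (hsum _ _), tsum_mul_left, tsum_mul_left]
    _ ≤ (1 - Int.fract s) * C + Int.fract s * C := by
        gcongr
        · exact sub_nonneg.2 (Int.fract_lt_one s).le
        · exact tsum_upwindConvection_intCast_mul_self_le hc hf _
        · exact tsum_upwindConvection_intCast_mul_self_le hc hf _
    _ = C := by ring

end Line

lemma extZ_natCast {m : ℕ} (V : Fin (m + 1) → ℝ) (i : Fin (m + 1)) : extZ m V (i : ℕ) = V i := by
  simp [extZ, Fin.is_le]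

lemma support_extZ_subset_range {m : ℕ} (V : Fin (m + 1) → ℝ) :
    support (extZ m V) ⊆ Set.range fun i : Fin (m + 1) ↦ ((i : ℕ) : ℤ) := by
  intro k hk
  have hk' : 0 ≤ k ∧ k ≤ m := by
    by_contra h
    exact hk (dif_neg h)
  exact ⟨⟨k.toNat, by omega⟩, Int.toNat_of_nonneg hk'.1⟩

lemma tsum_mul_extZ {m : ℕ} (G : ℤ → ℝ) (V : Fin (m + 1) → ℝ) :
    ∑' k, G k * extZ m V k = (fun i : Fin (m + 1) ↦ G (i : ℕ)) ⬝ᵥ V := by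
  have hinj : Injective fun i : Fin (m + 1) ↦ ((i : ℕ) : ℤ) :=
    Nat.cast_injective.comp Fin.val_injective
  rw [← hinj.tsum_eq ((support_mul_subset_right _ _).trans (support_extZ_subset_range V)),
    tsum_fintype, dotProduct]
  simp only [extZ_natCast]

lemma Mact_eq_mul_upwindConvection (c : ℝ) {m : ℕ} {Δx btil : ℝ} (hΔx : 0 < Δx)
    (hbtil : 0 < btil) (x₀ atil : ℝ) (V : Fin (m + 1) → ℝ) :
    Mact m Δx (fun i ↦ atil - btil * (x₀ + i * Δx)) (c - 1 / 2) (-3 * c) (1 / 2 + 3 * c) (-c) V =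
      btil • fun i : Fin (m + 1) ↦
        upwindConvection c ((atil / btil - x₀) / Δx) (extZ m V) (i : ℕ) := by
  ext i
  set s := (atil / btil - x₀) / Δx with hs
  have hspeed : atil - btil * (x₀ + i * Δx) = btil * Δx * (s - i) := by
    rw [hs]
    field_simp
    ring
  have hdiv : btil * Δx * (s - i) / Δx = btil * (s - i) := by field_simp
  have hbΔ : 0 < btil * Δx := mul_pos hbtil hΔx
  simp only [Mact, hspeed, hdiv, Pi.smul_apply, smul_eq_mul, upwindConvection, upwindStencil,
    ← extZ_natCast V i, Int.cast_natCast, neg_sub, neg_neg]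
  rcases lt_trichotomy (i : ℝ) s with h | h | h
  · rw [if_pos (mul_pos hbΔ (sub_pos.2 h)), posPart_of_nonpos (sub_nonpos.2 h.le),
      posPart_of_nonneg (sub_nonneg.2 h.le)]
    ring_nf
  · simp [h]
  · have hneg : btil * Δx * (s - i) < 0 := mul_neg_of_pos_of_neg hbΔ (sub_neg.2 h)
    rw [if_neg hneg.not_gt, if_pos hneg, posPart_of_nonneg (sub_nonneg.2 h.le),
      posPart_of_nonpos (sub_nonpos.2 h.le)]
    ring

theorem upwind_convection_log_norm_bound_general
    (wm1 w0 w1 w2 : ℝ)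
    (hw1 : wm1 + w0 + w1 + w2 = 0)
    (hw2 : -wm1 + w1 + 2 * w2 = 1)
    (hw3 : wm1 + w1 + 4 * w2 = 0)
    (hw4 : w2 ≤ 0)
    (m : ℕ) (Δx : ℝ) (hΔx : 0 < Δx) (x₀ atil btil : ℝ) (hbtil : 0 < btil)
    (V : Fin (m + 1) → ℝ) :
    Mact m Δx (fun i ↦ atil - btil * (x₀ + i * Δx)) wm1 w0 w1 w2 V ⬝ᵥ V
      ≤ (|wm1| - 10 * w2) * btil * (V ⬝ᵥ V) := by
  obtain ⟨c, rfl⟩ : ∃ c, w2 = -c := ⟨-w2, (neg_neg w2).symm⟩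
  obtain rfl : wm1 = c - 1 / 2 := by linarith
  obtain rfl : w1 = 1 / 2 + 3 * c := by linarith
  obtain rfl : w0 = -3 * c := by linarith
  have hc : 0 ≤ c := neg_nonpos.1 hw4
  have hf : (extZ m V).HasFiniteSupport := (Set.finite_range _).subset (support_extZ_subset_range V)
  have hVV : ∑' k, extZ m V k ^ 2 = V ⬝ᵥ V := by
    simp only [sq, tsum_mul_extZ, extZ_natCast]
  have hconst : |1 / 2 - 3 * c| ≤ |c - 1 / 2| + 2 * c := by
    rw [abs_sub_comm, show 3 * c - 1 / 2 = c - 1 / 2 + 2 * c by ring]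
    exact (abs_add_le _ _).trans_eq (by rw [abs_of_nonneg (mul_nonneg zero_le_two hc)])
  calc Mact m Δx (fun i ↦ atil - btil * (x₀ + i * Δx)) (c - 1 / 2) (-3 * c) (1 / 2 + 3 * c) (-c) V
        ⬝ᵥ V
      = btil * ∑' k, upwindConvection c ((atil / btil - x₀) / Δx) (extZ m V) k * extZ m V k := by
        rw [Mact_eq_mul_upwindConvection c hΔx hbtil, smul_dotProduct, ← tsum_mul_extZ, smul_eq_mul]
    _ ≤ btil * ((8 * c + |1 / 2 - 3 * c|) * (V ⬝ᵥ V)) := by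
        rw [← hVV]
        gcongr
        exact tsum_upwindConvection_mul_self_le hc hf _
    _ ≤ btil * ((|c - 1 / 2| + 10 * c) * (V ⬝ᵥ V)) := by
        gcongr ?_ * (?_ * ?_)
        · exact hVV ▸ tsum_nonneg fun _ ↦ sq_nonneg _
        · linarith
    _ = (|c - 1 / 2| - 10 * -c) * btil * (V ⬝ᵥ V) := by ring

/-- For every vector V ∈ ℝ^{m+1} one has
⟨MV,V⟩ ≤ (|w₋₁| − 10w₂)·b̃·⟨V,V⟩; equivalently μ₂[M] ≤ (|w₋₁| − 10w₂)·b̃. -/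
theorem upwind_convection_log_norm_bound
    (wm1 w0 w1 w2 : ℝ)
    (hw1 : wm1 + w0 + w1 + w2 = 0)
    (hw2 : -wm1 + w1 + 2*w2 = 1)
    (hw3 : wm1 + w1 + 4*w2 = 0)
    (hw4 : w2 ≤ 0)
    (m : ℕ) (hm : 4 ≤ m) (Δx : ℝ) (hΔx : 0 < Δx) (x₀ : ℝ)
    (atil btil : ℝ) (hbtil : 0 < btil)
    (i₀ : ℕ) (hi₀l : 2 ≤ i₀) (hi₀u : i₀ ≤ m - 2)
    (hg : atil - btil * (x₀ + i₀ * Δx) = 0) :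
    ∀ V : Fin (m+1) → ℝ,
      (Mact m Δx (fun i => atil - btil * (x₀ + i * Δx)) wm1 w0 w1 w2 V) ⬝ᵥ V
        ≤ (|wm1| - 10*w2) * btil * (V ⬝ᵥ V) := by
  exact upwind_convection_log_norm_bound_general wm1 w0 w1 w2 hw1 hw2 hw3 hw4 m Δx hΔx x₀
    atil btil hbtil
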